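/- arXiv:2207.02713 — 2 statements merged into one kernel-verified Lean document; each statement's English description precedes it below -/
import Mathlib

section
/- For every ν ≥ 0, every λ ∈ [1/2, 2] and every x > 0, I_{ν−1}(x)/I_ν(x) < (ν − λ + √((ν + λ)² + c·x²))/x, where c = (ν + λ)/(ν − λ + 2√(2λ) − 1). -/
/-- The modified Bessel function of the first kind,
`I_ν(x) = ∑_{k=0}^∞ (x/2)^{2k+ν} / (k! Γ(k+ν+1))`
(here `1/Γ` vanishes at nonpositive integer arguments, since `Real.Gamma` is `0` there). -/
noncomputable def besselI (ν x : ℝ) : ℝ :=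
  ∑' k : ℕ, (x / 2) ^ (2 * (k : ℝ) + ν) / ((Nat.factorial k : ℝ) * Real.Gamma ((k : ℝ) + ν + 1))

open Real Set

/-- coefficients `1/Γ(k+ν+1)` -/
noncomputable def bdc (ν : ℝ) (k : ℕ) : ℝ := (Real.Gamma ((k : ℝ) + ν + 1))⁻¹

/-- the entire function `∑ t^k/(k! Γ(k+ν+1))` -/
noncomputable def bphi (ν t : ℝ) : ℝ := ∑' k : ℕ, bdc ν k * (t ^ k / (Nat.factorial k : ℝ))

lemma bdc_bound (ν : ℝ) (hν : -1 ≤ ν) : ∃ M : ℝ, 0 ≤ M ∧ ∀ k, |bdc ν k| ≤ M := by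
  refine ⟨|bdc ν 0| + |bdc ν 1| + 1, by positivity, fun k => ?_⟩
  rcases k with _ | _ | k
  · have := abs_nonneg (bdc ν 1); linarith
  · have := abs_nonneg (bdc ν 0); simp only [zero_add]; linarith
  · have h0 := abs_nonneg (bdc ν 0)
    have h1 := abs_nonneg (bdc ν 1)
    have hk : (0 : ℝ) ≤ k := Nat.cast_nonneg k
    have h2 : (2 : ℝ) ≤ ((k + 1 + 1 : ℕ) : ℝ) + ν + 1 := by push_cast; linarith
    have h3 : Real.Gamma 2 ≤ Real.Gamma (((k + 1 + 1 : ℕ) : ℝ) + ν + 1) :=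
      Real.Gamma_strictMonoOn_Ici.monotoneOn (mem_Ici.2 le_rfl) (mem_Ici.2 h2) h2
    rw [Real.Gamma_two] at h3
    have h4 : |bdc ν (k + 1 + 1)| ≤ 1 := by
      unfold bdc
      rw [abs_of_nonneg (by positivity)]
      exact inv_le_one_of_one_le₀ h3
    linarith

lemma bphi_summable (ν : ℝ) (hν : -1 ≤ ν) (t : ℝ) :
    Summable fun k : ℕ => bdc ν k * (t ^ k / (Nat.factorial k : ℝ)) := by
  obtain ⟨M, hM, hb⟩ := bdc_bound ν hν
  refine Summable.of_norm_bounded ((Real.summable_pow_div_factorial |t|).mul_left M) fun k => ?_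
  rw [norm_mul, norm_div, norm_pow, Real.norm_eq_abs, Real.norm_eq_abs, Real.norm_eq_abs,
    Nat.abs_cast]
  gcongr
  exact hb k

lemma bphi_hasDerivAt (ν : ℝ) (hν : -1 ≤ ν) (t : ℝ) :
    HasDerivAt (bphi ν) (bphi (ν + 1) t) t := by
  obtain ⟨M, hM, hb⟩ := bdc_bound ν hν
  set R : ℝ := |t| + 1 with hR
  have hR0 : 0 < R := by positivity
  have key : ∀ (r : ℝ) (n : ℕ), ((n + 1 : ℕ) : ℝ) * r ^ (n + 1 - 1) / (Nat.factorial (n + 1) : ℝ)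
      = r ^ n / (Nat.factorial n : ℝ) := by
    intro r n
    rw [Nat.factorial_succ]
    have : (Nat.factorial n : ℝ) ≠ 0 := by positivity
    push_cast
    have : (n : ℝ) + 1 ≠ 0 := by positivity
    field_simp
  have hu : Summable fun n : ℕ => M * ((n : ℝ) * R ^ (n - 1) / (Nat.factorial n : ℝ)) := by
    rw [← summable_nat_add_iff 1]
    simp only [key]
    exact (Real.summable_pow_div_factorial R).mul_left M
  have h := hasDerivAt_tsum_of_isPreconnected (t := Metric.ball (0 : ℝ) R)
    (g := fun (k : ℕ) (y : ℝ) => bdc ν k * (y ^ k / (Nat.factorial k : ℝ)))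
    (g' := fun (k : ℕ) (y : ℝ) => bdc ν k * ((k : ℝ) * y ^ (k - 1) / (Nat.factorial k : ℝ)))
    (y₀ := 0) (y := t)
    hu Metric.isOpen_ball (convex_ball (0 : ℝ) R).isPreconnected
    (fun n y _ => ((hasDerivAt_pow n y).div_const _).const_mul _)
    (fun n y hy => by
      have hy' : |y| ≤ R := by simpa using (mem_ball_zero_iff.1 hy).le
      rw [norm_mul, norm_div, norm_mul, norm_pow, Real.norm_eq_abs, Real.norm_eq_abs,
        Real.norm_eq_abs, Real.norm_eq_abs, Nat.abs_cast, Nat.abs_cast]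
      gcongr
      exact hb n)
    (by simpa using hR0) (bphi_summable ν hν 0) (by simp [hR])
  have h2 : (∑' k : ℕ, bdc ν k * ((k : ℝ) * t ^ (k - 1) / (Nat.factorial k : ℝ)))
      = bphi (ν + 1) t := by
    rw [Summable.tsum_eq_zero_add]
    · simp only [key]
      simp only [Nat.cast_zero, zero_mul, zero_div, mul_zero, zero_add]
      unfold bphi
      refine tsum_congr fun k => ?_
      congr 1
      unfold bdc
      congr 2
      push_cast
      ring
    · rw [← summable_nat_add_iff 1]
      simp only [key]
      have := bphi_summable (ν + 1) (by linarith) t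
      refine this.congr fun k => ?_
      congr 1
      unfold bdc
      congr 2
      push_cast
      ring
  rw [h2] at h
  exact h

lemma bphi_rec (ν : ℝ) (hν : 0 ≤ ν) (t : ℝ) :
    t * bphi (ν + 1) t = bphi (ν - 1) t - ν * bphi ν t := by
  have h1 := bphi_summable (ν - 1) (by linarith) t
  have h2 := (bphi_summable ν (by linarith) t).mul_left ν
  have h3 : ∀ k : ℕ, bdc (ν - 1) k * (t ^ k / (Nat.factorial k : ℝ))
      - ν * (bdc ν k * (t ^ k / (Nat.factorial k : ℝ)))
      = k * (bdc ν k * (t ^ k / (Nat.factorial k : ℝ))) := by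
    intro k
    have : bdc (ν - 1) k = (k + ν) * bdc ν k := by
      unfold bdc
      have e : (k : ℝ) + (ν - 1) + 1 = k + ν := by ring
      rw [e]
      by_cases h : (k : ℝ) + ν = 0
      · rw [h]; simp [Real.Gamma_zero]
      · rw [Real.Gamma_add_one h, mul_inv, ← mul_assoc, mul_inv_cancel₀ h, one_mul]
    rw [this]; ring
  unfold bphi
  rw [← tsum_mul_left, ← tsum_mul_left, ← Summable.tsum_sub h1 h2]
  have hs := h1.sub h2
  simp only [h3] at hs ⊢
  rw [Summable.tsum_eq_zero_add hs]
  simp only [Nat.cast_zero, zero_mul, zero_add]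
  refine tsum_congr fun k => ?_
  have e : bdc (ν + 1) k = bdc ν (k + 1) := by
    unfold bdc
    congr 2
    push_cast
    ring
  rw [e, Nat.factorial_succ]
  have : (Nat.factorial k : ℝ) ≠ 0 := by positivity
  have : (k : ℝ) + 1 ≠ 0 := by positivity
  push_cast
  field_simp
  ring

lemma bphi_pos (ν : ℝ) (hν : 0 ≤ ν) (t : ℝ) (ht : 0 ≤ t) : 0 < bphi ν t := by
  have hc : ∀ k, 0 < bdc ν k := fun k => by
    unfold bdc
    have := Real.Gamma_pos_of_pos (show (0 : ℝ) < k + ν + 1 by positivity)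
    positivity
  refine (bphi_summable ν (by linarith) t).tsum_pos (fun k => ?_) 0 ?_
  · have := hc k
    positivity
  · simpa using hc 0

lemma besselI_eq (ν x : ℝ) (hx : 0 < x) : besselI ν x = (x / 2) ^ ν * bphi ν (x ^ 2 / 4) := by
  unfold besselI bphi
  rw [← tsum_mul_left]
  refine tsum_congr fun k => ?_
  have h2 : 0 < x / 2 := by positivity
  rw [Real.rpow_add h2, Real.rpow_mul h2.le, Real.rpow_natCast]
  have : (x / 2) ^ (2 : ℝ) = x ^ 2 / 4 := by
    rw [Real.rpow_two]; ring
  rw [this]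
  unfold bdc
  rw [div_eq_mul_inv, div_eq_mul_inv, mul_inv]
  ring

/-- the square root -/
noncomputable def bs (a c x : ℝ) : ℝ := Real.sqrt (a ^ 2 + c * x ^ 2)

/-- the weighted difference -/
noncomputable def bH (ν lam a c x : ℝ) : ℝ :=
  ((ν - lam + bs a c x) * bphi ν (x ^ 2 / 4) - 2 * bphi (ν - 1) (x ^ 2 / 4)) * x ^ (2 * ν)
    * Real.exp (bs a c x - a * Real.log (bs a c x + a))

lemma bs_pos (a c x : ℝ) (ha : 0 < a) (hc : 0 < c) : 0 < bs a c x :=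
  Real.sqrt_pos.2 (by positivity)

lemma bs_sq (a c x : ℝ) (hc : 0 < c) : bs a c x ^ 2 = a ^ 2 + c * x ^ 2 :=
  Real.sq_sqrt (by positivity)

lemma bs_hasDerivAt (a c x : ℝ) (ha : 0 < a) (hc : 0 < c) :
    HasDerivAt (bs a c) (c * x / bs a c x) x := by
  have h : HasDerivAt (fun x : ℝ => a ^ 2 + c * x ^ 2) (c * (2 * x)) x := by
    simpa using ((hasDerivAt_pow 2 x).const_mul c).const_add (a ^ 2)
  have h2 := h.sqrt (by positivity)
  refine (h2.congr_deriv ?_ : HasDerivAt (bs a c) _ x)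
  have := bs_pos a c x ha hc
  unfold bs at *
  field_simp

lemma bH_hasDerivAt (ν m x : ℝ) (hν : 0 ≤ ν) (a d lam : ℝ) (ha : 0 < a) (hd : 0 < d)
    (hl : lam = m ^ 2 / 2) (ha' : a = ν + lam) (hd' : d = ν - lam + 2 * m - 1) (hx : 0 < x) :
    HasDerivAt (bH ν lam a (a / d))
      (x ^ (2 * ν) * Real.exp (bs a (a / d) x - a * Real.log (bs a (a / d) x + a)) *
        bphi ν (x ^ 2 / 4) * ((bs a (a / d) x - a) * ((m - 1) * bs a (a / d) x - a) ^ 2 /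
          (a * bs a (a / d) x * x))) x := by
  have hc : 0 < a / d := by positivity
  have hsp := bs_pos a (a / d) x ha hc
  have hsq := bs_sq a (a / d) x hc
  have hs := bs_hasDerivAt a (a / d) x ha hc
  have ht : HasDerivAt (fun x : ℝ => x ^ 2 / 4) (x / 2) x := by
    refine ((hasDerivAt_pow 2 x).div_const 4).congr_deriv ?_
    norm_num
    linarith
  have hphi : HasDerivAt (fun x : ℝ => bphi ν (x ^ 2 / 4))
      (bphi (ν + 1) (x ^ 2 / 4) * (x / 2)) x := by
    have h := (bphi_hasDerivAt ν (by linarith) (x ^ 2 / 4)).comp x ht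
    exact h
  have hpsi : HasDerivAt (fun x : ℝ => bphi (ν - 1) (x ^ 2 / 4))
      (bphi ν (x ^ 2 / 4) * (x / 2)) x := by
    have h := (bphi_hasDerivAt (ν - 1) (by linarith) (x ^ 2 / 4)).comp x ht
    rw [sub_add_cancel] at h
    exact h
  have hpow : HasDerivAt (fun x : ℝ => x ^ (2 * ν)) (2 * ν * x ^ (2 * ν - 1)) x :=
    Real.hasDerivAt_rpow_const (Or.inl hx.ne')
  rw [Real.rpow_sub_one hx.ne'] at hpow
  have hE := (hs.sub (((hs.add_const a).log (by positivity)).const_mul a)).exp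
  have hmain := ((((hs.const_add (ν - lam)).mul hphi).sub (hpsi.const_mul 2)).mul hpow).mul hE
  refine (hmain.congr_deriv ?_ : HasDerivAt (bH ν lam a (a / d)) _ x)
  have hrec := bphi_rec ν hν (x ^ 2 / 4)
  simp only [Pi.sub_apply, Pi.mul_apply]
  have hrec' : bphi (ν + 1) (x ^ 2 / 4) =
    (bphi (ν - 1) (x ^ 2 / 4) - ν * bphi ν (x ^ 2 / 4)) * 4 / x ^ 2 := by
    field_simp; linarith
  rw [hrec']
  generalize bphi (ν - 1) (x ^ 2 / 4) = ψ
  generalize bphi ν (x ^ 2 / 4) = φ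
  generalize Real.exp _ = E
  generalize x ^ (2 * ν) = X
  generalize bs a (a / d) x = s at *
  have hx2 : x ^ 2 = (s ^ 2 - a ^ 2) * d / a := by
    rw [hsq]; field_simp; ring
  have hsa : s + a ≠ 0 := by positivity
  have e1 : a / d * x / s = (s ^ 2 - a ^ 2) / (s * x) := by
    field_simp; rw [hx2]; field_simp
  have e2 : (s ^ 2 - a ^ 2) / (s * x) - a * ((s ^ 2 - a ^ 2) / (s * x) / (s + a)) = (s - a) / x := by
    field_simp; ring
  rw [e1, e2]
  have e3 : φ * (x / 2) = φ * ((s ^ 2 - a ^ 2) * d / a) / (2 * x) := by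
    rw [← hx2]; field_simp
  rw [e3]
  have hν' : ν = a - lam := by linarith
  have hd2 : d = a - 2 * lam + 2 * m - 1 := by linarith
  clear hsq hs hrec hrec' hE hmain hpow hphi hpsi ht hx2 e1 e2 e3
  field_simp
  rw [hd2, hν', hl]
  ring

lemma bH_zero (ν lam a c : ℝ) (hν : 0 ≤ ν) (ha : 0 < a) (ha' : a = ν + lam) :
    bH ν lam a c 0 = 0 := by
  have h := bphi_rec ν hν 0
  have hs : bs a c 0 = a := by
    unfold bs
    simp [Real.sqrt_sq ha.le]
  unfold bH
  rw [hs]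
  have : (ν - lam + a) * bphi ν ((0 : ℝ) ^ 2 / 4) - 2 * bphi (ν - 1) ((0 : ℝ) ^ 2 / 4) = 0 := by
    norm_num
    rw [ha']
    linarith
  rw [this]; simp

lemma bH_cont (ν lam a c : ℝ) (hν : 0 ≤ ν) (ha : 0 < a) (hc : 0 < c) :
    Continuous (bH ν lam a c) := by
  have h1 : Continuous (bphi ν) := continuous_iff_continuousAt.2 fun t =>
    (bphi_hasDerivAt ν (by linarith) t).continuousAt
  have h2 : Continuous (bphi (ν - 1)) := continuous_iff_continuousAt.2 fun t =>
    (bphi_hasDerivAt (ν - 1) (by linarith) t).continuousAt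
  have h3 : Continuous (bs a c) := by unfold bs; fun_prop
  have h4 : Continuous fun x : ℝ => x ^ (2 * ν) := Real.continuous_rpow_const (by positivity)
  have h5 : Continuous fun x => Real.log (bs a c x + a) :=
    (h3.add continuous_const).log fun x => by
      have := bs_pos a c x ha hc
      exact (add_pos this ha).ne'
  unfold bH
  fun_prop

theorem besselI_ratio_close_to_best_upper (ν lam x : ℝ) (hν : 0 ≤ ν)
    (hlam : lam ∈ Set.Icc (1 / 2 : ℝ) 2) (hx : 0 < x) :
    besselI (ν - 1) x / besselI ν x <
      (ν - lam +
          Real.sqrt ((ν + lam) ^ 2 +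
            ((ν + lam) / (ν - lam + 2 * Real.sqrt (2 * lam) - 1)) * x ^ 2)) / x := by
  obtain ⟨hl1, hl2⟩ := hlam
  obtain ⟨m, hm⟩ : ∃ m, m = Real.sqrt (2 * lam) := ⟨_, rfl⟩
  rw [← hm]
  have hm2 : m ^ 2 = 2 * lam := by rw [hm]; exact Real.sq_sqrt (by linarith)
  have hm0 : 0 ≤ m := by rw [hm]; positivity
  have hm1 : 1 ≤ m := by nlinarith
  have hmle : m ≤ 2 := by nlinarith
  obtain ⟨a, ha'⟩ : ∃ a, a = ν + lam := ⟨_, rfl⟩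
  obtain ⟨d, hd'⟩ : ∃ d, d = ν - lam + 2 * m - 1 := ⟨_, rfl⟩
  rw [← ha', ← hd']
  have ha : 0 < a := by linarith
  have hd : 0 < d := by nlinarith
  have hc : 0 < a / d := by positivity
  have hl : lam = m ^ 2 / 2 := by linarith
  have hder := fun y (hy : 0 < y) => bH_hasDerivAt ν m y hν a d lam ha hd hl ha' hd' hy
  have hcont := bH_cont ν lam a (a / d) hν ha hc
  have hsa : ∀ y, 0 < y → a < bs a (a / d) y := fun y hy => by
    refine Real.lt_sqrt_of_sq_lt ?_
    have : 0 < a / d * y ^ 2 := by positivity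
    linarith
  have hmono : MonotoneOn (bH ν lam a (a / d)) (Ici 0) := by
    refine monotoneOn_of_deriv_nonneg (convex_Ici 0) hcont.continuousOn ?_ ?_
    · intro y hy
      rw [interior_Ici] at hy
      exact (hder y hy).differentiableAt.differentiableWithinAt
    · intro y hy
      rw [interior_Ici] at hy
      have hy' : 0 < y := hy
      rw [(hder y hy').deriv]
      have h1 := bphi_pos ν hν (y ^ 2 / 4) (by positivity)
      have h2 := hsa y hy'
      have h3 : 0 ≤ bs a (a / d) y - a := by linarith
      have h4 := bs_pos a (a / d) y ha hc
      positivity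
  -- a subinterval on which the derivative does not vanish
  obtain ⟨p, hp⟩ : ∃ p : ℝ, ∀ y, 0 < y → (m - 1) * bs a (a / d) y - a = 0 → y = p := by
    by_cases hex : ∃ p, 0 < p ∧ (m - 1) * bs a (a / d) p - a = 0
    · obtain ⟨p, hp0, hp⟩ := hex
      refine ⟨p, fun y hy hy0 => ?_⟩
      have hmne : m - 1 ≠ 0 := by
        intro h
        rw [h] at hp
        linarith
      have he : bs a (a / d) y = bs a (a / d) p := mul_left_cancel₀ hmne (by linarith)
      have h1 := bs_sq a (a / d) y hc
      have h2 := bs_sq a (a / d) p hc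
      rw [he, h2] at h1
      have h3 : y ^ 2 = p ^ 2 := mul_left_cancel₀ hc.ne' (by linarith)
      exact (pow_left_inj₀ hy.le hp0.le two_ne_zero).1 h3
    · push Not at hex
      exact ⟨0, fun y hy h => absurd h (hex y hy)⟩
  obtain ⟨y, hy0, hyx, hyp⟩ : ∃ y, 0 < y ∧ y < x ∧ ∀ t, y < t → t < x → t ≠ p := by
    by_cases h : p < x
    · exact ⟨max p (x / 2), lt_max_of_lt_right (by linarith), max_lt h (by linarith),
        fun t ht _ => ((le_max_left _ _).trans_lt ht).ne'⟩
    · exact ⟨x / 2, by linarith, by linarith, fun t _ ht => by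
        push Not at h
        exact (ht.trans_le h).ne⟩
  have hstrict : StrictMonoOn (bH ν lam a (a / d)) (Icc y x) := by
    refine strictMonoOn_of_deriv_pos (convex_Icc y x) hcont.continuousOn ?_
    intro t ht
    rw [interior_Icc] at ht
    have ht' : 0 < t := hy0.trans ht.1
    rw [(hder t ht').deriv]
    have h1 := bphi_pos ν hν (t ^ 2 / 4) (by positivity)
    have h2 := hsa t ht'
    have h3 : 0 < bs a (a / d) t - a := by linarith
    have h4 := bs_pos a (a / d) t ha hc
    have h5 : (m - 1) * bs a (a / d) t - a ≠ 0 := fun h => hyp t ht.1 ht.2 (hp t ht' h)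
    positivity
  have hy1 : 0 ≤ bH ν lam a (a / d) y := by
    rw [← bH_zero ν lam a (a / d) hν ha ha']
    exact hmono (mem_Ici.2 le_rfl) (mem_Ici.2 hy0.le) hy0.le
  have hx1 : 0 < bH ν lam a (a / d) x :=
    hy1.trans_lt (hstrict ⟨le_rfl, hyx.le⟩ ⟨hyx.le, le_rfl⟩ hyx)
  unfold bH at hx1
  have hG := pos_of_mul_pos_left (pos_of_mul_pos_left hx1 (by positivity)) (by positivity)
  have hphi := bphi_pos ν hν (x ^ 2 / 4) (by positivity)
  rw [besselI_eq _ x hx, besselI_eq _ x hx, Real.rpow_sub_one (by positivity)]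
  change _ < (ν - lam + bs a (a / d) x) / x
  have hX : 0 < (x / 2) ^ ν := by positivity
  have e : (x / 2) ^ ν / (x / 2) * bphi (ν - 1) (x ^ 2 / 4) / ((x / 2) ^ ν * bphi ν (x ^ 2 / 4))
      = (2 * bphi (ν - 1) (x ^ 2 / 4) / bphi ν (x ^ 2 / 4)) / x := by
    field_simp
  rw [e]
  gcongr
  rw [div_lt_iff₀ hphi]
  linarith
end

section
/- For every λ ∈ [1/2, 2], every ν ≥ λ with ν + λ + 1 − 2√(2λ) > 0 (this positivity fails only when ν = λ = 1/2), and every x > 0, K_{ν+1}(x)/K_ν(x) > (ν + λ + √((ν − λ)² + c·x²))/x, where c = (ν − λ)/(ν + λ − 2√(2λ) + 1). -/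
/-- The modified Bessel function of the second kind,
`K_ν(x) = ∫_0^∞ e^{-x cosh t} cosh(ν t) dt`. -/
noncomputable def besselK (ν x : ℝ) : ℝ :=
  ∫ t in Set.Ioi (0 : ℝ), Real.exp (-x * Real.cosh t) * Real.cosh (ν * t)

open Real Set Filter Topology MeasureTheory

theorem bk_bound (a x t : ℝ) (hx : 0 < x) (ht : 0 ≤ t) :
    exp (-x * cosh t) * cosh (a * t) ≤ exp ((|a| + 1) ^ 2 / x) * exp (-t) := by
  have h1 : cosh (a * t) ≤ exp (|a| * t) := by
    rw [← cosh_abs, abs_mul, abs_of_nonneg ht, cosh_eq]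
    have : exp (-(|a| * t)) ≤ exp (|a| * t) := exp_le_exp.2 (by nlinarith [abs_nonneg a])
    linarith
  have h2 : t ^ 2 / 4 ≤ cosh t := by
    rw [cosh_eq]
    have e1 := quadratic_le_exp_of_nonneg ht
    have e2 := add_one_le_exp (-t)
    linarith
  calc exp (-x * cosh t) * cosh (a * t) ≤ exp (-x * cosh t) * exp (|a| * t) := by gcongr
    _ = exp (-x * cosh t + |a| * t) := by rw [exp_add]
    _ ≤ exp ((|a| + 1) ^ 2 / x + -t) := by
        apply exp_le_exp.2
        have h3 : x * (t ^ 2 / 4) ≤ x * cosh t := by gcongr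
        have h4 : (|a| + 1) * t ≤ (|a| + 1) ^ 2 / x + x * (t ^ 2 / 4) := by
          have : (|a| + 1) ^ 2 / x + x * (t ^ 2 / 4) - (|a| + 1) * t
              = ((|a| + 1) - x * t / 2) ^ 2 / x := by
            field_simp; ring
          have : 0 ≤ ((|a| + 1) - x * t / 2) ^ 2 / x := by positivity
          linarith
        linarith
    _ = _ := by rw [exp_add]

theorem bk_integrable (a x : ℝ) (hx : 0 < x) :
    IntegrableOn (fun t => exp (-x * cosh t) * cosh (a * t)) (Ioi 0) := by
  refine Integrable.mono' ((integrableOn_exp_neg_Ioi 0).const_mul (exp ((|a| + 1) ^ 2 / x)))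
    (Continuous.aestronglyMeasurable (by fun_prop)) ?_
  refine (ae_restrict_iff' measurableSet_Ioi).2 (Eventually.of_forall fun t ht => ?_)
  rw [norm_of_nonneg (mul_nonneg (exp_pos _).le (cosh_pos _).le)]
  exact bk_bound a x t hx (le_of_lt ht)

theorem bk_pos (a x : ℝ) (hx : 0 < x) : 0 < besselK a x := by
  unfold besselK
  have hp : ∀ t, 0 < exp (-x * cosh t) * cosh (a * t) := fun t =>
    mul_pos (exp_pos _) (cosh_pos _)
  rw [setIntegral_pos_iff_support_of_nonneg_ae (Eventually.of_forall fun t => (hp t).le)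
    (bk_integrable a x hx)]
  have : Function.support (fun t => exp (-x * cosh t) * cosh (a * t)) = univ := by
    ext t; simpa using (cosh_pos _).ne'
  rw [this]; simp

theorem bk_mono (a x : ℝ) (ha : 0 ≤ a) (hx : 0 < x) : besselK a x ≤ besselK (a + 1) x := by
  unfold besselK
  refine setIntegral_mono_on (bk_integrable a x hx) (bk_integrable _ x hx) measurableSet_Ioi ?_
  intro t ht
  have ht : 0 < t := ht
  gcongr
  rw [cosh_le_cosh, abs_of_nonneg (by positivity), abs_of_nonneg (by positivity)]
  nlinarith

theorem bk_prod_cosh (a t : ℝ) :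
    cosh t * cosh (a * t) = (cosh ((a + 1) * t) + cosh ((a - 1) * t)) / 2 := by
  rw [show (a + 1) * t = a * t + t by ring, show (a - 1) * t = a * t - t by ring, cosh_add,
    cosh_sub]
  ring

theorem bk_prod_sinh (a t : ℝ) :
    sinh t * sinh (a * t) = (cosh ((a + 1) * t) - cosh ((a - 1) * t)) / 2 := by
  rw [show (a + 1) * t = a * t + t by ring, show (a - 1) * t = a * t - t by ring, cosh_add,
    cosh_sub]
  ring

theorem bk_deriv0 (a x : ℝ) (hx : 0 < x) :
    HasDerivAt (besselK a) (-(besselK (a + 1) x + besselK (a - 1) x) / 2) x := by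
  have key := (hasDerivAt_integral_of_dominated_loc_of_deriv_le
    (μ := volume.restrict (Ioi (0 : ℝ)))
    (F := fun y t => exp (-y * cosh t) * cosh (a * t))
    (F' := fun y t => exp (-y * cosh t) * (-cosh t) * cosh (a * t))
    (x₀ := x) (s := Ioi (x / 2))
    (bound := fun t => (exp (-(x / 2) * cosh t) * cosh ((a + 1) * t)
      + exp (-(x / 2) * cosh t) * cosh ((a - 1) * t)) / 2)
    (Ioi_mem_nhds (by linarith))
    (Eventually.of_forall fun y => Continuous.aestronglyMeasurable (by fun_prop))
    (bk_integrable a x hx) (Continuous.aestronglyMeasurable (by fun_prop)) ?_ ?_ ?_).2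
  · refine HasDerivAt.congr_deriv (key) ?_
    symm
    unfold besselK
    rw [← integral_add (bk_integrable _ x hx) (bk_integrable _ x hx), ← integral_neg,
      ← integral_div]
    congr 1
    ext t
    have := bk_prod_cosh a t
    linear_combination (exp (-x * cosh t)) * this
  · refine Eventually.of_forall fun t y hy => ?_
    have hy : x / 2 < y := hy
    have h1 : 0 ≤ cosh t * cosh (a * t) := mul_nonneg (cosh_pos _).le (cosh_pos _).le
    have e : exp (-y * cosh t) * (-cosh t) * cosh (a * t)
      = -(exp (-y * cosh t) * (cosh t * cosh (a * t))) := by ring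
    rw [e, norm_neg, norm_of_nonneg (mul_nonneg (exp_pos _).le h1)]
    have e2 : exp (-y * cosh t) ≤ exp (-(x / 2) * cosh t) :=
      exp_le_exp.2 (by nlinarith [cosh_pos t])
    calc _ ≤ exp (-(x / 2) * cosh t) * (cosh t * cosh (a * t)) := by gcongr
      _ = _ := by rw [bk_prod_cosh]; ring
  · exact ((bk_integrable _ _ (by linarith)).add (bk_integrable _ _ (by linarith))).div_const 2
  · refine Eventually.of_forall fun t y hy => ?_
    have h := (((hasDerivAt_id y).neg.mul_const (cosh t)).exp).mul_const (cosh (a * t))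
    simpa using h

theorem bk_rec (a x : ℝ) (hx : 0 < x) :
    x * (besselK (a + 1) x - besselK (a - 1) x) = 2 * a * besselK a x := by
  have hi1 := bk_integrable (a + 1) x hx
  have hi2 := bk_integrable (a - 1) x hx
  have hi := bk_integrable a x hx
  have h := integral_Ioi_of_hasDerivAt_of_tendsto' (a := 0) (m := 0)
    (f := fun t => exp (-x * cosh t) * sinh (a * t))
    (f' := fun t => a * (exp (-x * cosh t) * cosh (a * t))
      - x / 2 * (exp (-x * cosh t) * cosh ((a + 1) * t) - exp (-x * cosh t) * cosh ((a - 1) * t)))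
    ?_ ((hi.const_mul a).sub ((hi1.sub hi2).const_mul (x / 2))) ?_
  · have e : (∫ t in Ioi (0 : ℝ), (a * (exp (-x * cosh t) * cosh (a * t))
      - x / 2 * (exp (-x * cosh t) * cosh ((a + 1) * t)
        - exp (-x * cosh t) * cosh ((a - 1) * t))))
      = a * besselK a x - x / 2 * (besselK (a + 1) x - besselK (a - 1) x) := by
      unfold besselK
      rw [← integral_sub hi1 hi2, ← integral_const_mul, ← integral_const_mul]
      exact integral_sub (hi.const_mul a) ((hi1.sub hi2).const_mul (x / 2))
    rw [e] at h
    simp at h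
    linarith
  · intro t _
    have h1 := (((hasDerivAt_cosh t).const_mul (-x)).exp).mul
      (((hasDerivAt_id t).const_mul a).sinh)
    refine HasDerivAt.congr_deriv (h1) ?_
    symm
    have := bk_prod_sinh a t
    simp only [id, mul_one]
    linear_combination (x * exp (-x * cosh t)) * this
  · refine squeeze_zero_norm' (a := fun t => exp ((|a| + 1) ^ 2 / x) * exp (-t)) ?_ ?_
    · filter_upwards [eventually_ge_atTop 0] with t ht
      refine le_trans ?_ (bk_bound a x t hx ht)
      rw [norm_mul, norm_of_nonneg (exp_pos _).le]
      gcongr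
      rw [Real.norm_eq_abs, abs_sinh, ← cosh_abs]
      exact (sinh_lt_cosh _).le
    · simpa using (tendsto_exp_neg_atTop_nhds_zero.const_mul (exp ((|a| + 1) ^ 2 / x)))

/-- Riccati equation for `y = x K_{a+1}(x) / K_a(x)`. -/
theorem bk_riccati (a x : ℝ) (hx : 0 < x) :
    HasDerivAt (fun z => z * besselK (a + 1) z / besselK a z)
      (((x * besselK (a + 1) x / besselK a x) ^ 2
        - 2 * a * (x * besselK (a + 1) x / besselK a x) - x ^ 2) / x) x := by
  have h := ((hasDerivAt_id x).mul (bk_deriv0 (a + 1) x hx)).div (bk_deriv0 a x hx)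
    (bk_pos a x hx).ne'
  refine HasDerivAt.congr_deriv (h) ?_
  symm
  have r1 := bk_rec a x hx
  have r2 := bk_rec (a + 1) x hx
  rw [show a + 1 - 1 = a by ring] at *
  have hK := bk_pos a x hx
  have e1 : besselK (a - 1) x = besselK (a + 1) x - 2 * a * besselK a x / x := by
    field_simp; linarith
  have e2 : besselK (a + 1 + 1) x = besselK a x + 2 * (a + 1) * besselK (a + 1) x / x := by
    field_simp; linarith
  rw [e1, e2]
  simp only [Pi.mul_apply, id]
  field_simp
  ring

/-- Comparison lemma. -/
theorem bk_compare (f P g : ℝ → ℝ) (M X : ℝ)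
    (hf : ∀ x, 0 < x → HasDerivAt f (P x * f x + g x) x)
    (hPc : ContinuousOn P (Ioi 0)) (hP : ∀ x, 0 < x → 1 ≤ P x)
    (hg : ∀ x, 0 < x → 0 ≤ g x) (hgX : ∀ x, 0 < x → X < x → 0 < g x)
    (hM : ∀ x, 0 < x → f x ≤ M) (x : ℝ) (hx : 0 < x) : f x < 0 := by
  by_contra! hfx
  let A : ℝ → ℝ := fun u => ∫ t in x..u, P t
  have hA : ∀ u, 0 < u → HasDerivAt A (P u) u := by
    intro u hu
    refine intervalIntegral.integral_hasDerivAt_right ?_ ?_ ?_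
    · refine ContinuousOn.intervalIntegrable (hPc.mono ?_)
      intro t ht
      exact lt_of_lt_of_le (lt_min hx hu) ht.1
    · exact hPc.stronglyMeasurableAtFilter isOpen_Ioi u hu
    · exact hPc.continuousAt (Ioi_mem_nhds hu)
  have hw : ∀ u, 0 < u → HasDerivAt (fun u => exp (-A u) * f u) (exp (-A u) * g u) u := by
    intro u hu
    refine HasDerivAt.congr_deriv (((hA u hu).neg.exp).mul (hf u hu)) ?_
    symm
    simp only [Pi.neg_apply]
    ring
  have mono : MonotoneOn (fun u => exp (-A u) * f u) (Ici x) := by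
    refine monotoneOn_of_deriv_nonneg (convex_Ici x) ?_ ?_ ?_
    · intro u hu
      exact (hw u (lt_of_lt_of_le hx hu)).continuousAt.continuousWithinAt
    · intro u hu
      rw [interior_Ici] at hu
      exact (hw u (lt_trans hx hu)).differentiableAt.differentiableWithinAt
    · intro u hu
      rw [interior_Ici] at hu
      rw [(hw u (lt_trans hx hu)).deriv]
      exact mul_nonneg (exp_pos _).le (hg u (lt_trans hx hu))
  have nonneg : ∀ u, x ≤ u → 0 ≤ f u := by
    intro u hu
    have h1 := mono self_mem_Ici hu hu
    have h2 : 0 ≤ exp (-A x) * f x := mul_nonneg (exp_pos _).le hfx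
    exact nonneg_of_mul_nonneg_right (h2.trans h1) (exp_pos _)
  let x1 := max x X
  have hxx1 : x ≤ x1 := le_max_left _ _
  have hXx1 : X ≤ x1 := le_max_right _ _
  have hx1 : 0 < x1 := lt_of_lt_of_le hx hxx1
  have smono : StrictMonoOn (fun u => exp (-A u) * f u) (Ici x1) := by
    refine strictMonoOn_of_deriv_pos (convex_Ici x1) ?_ ?_
    · intro u hu
      exact (hw u (lt_of_lt_of_le hx1 hu)).continuousAt.continuousWithinAt
    · intro u hu
      rw [interior_Ici] at hu
      have hu' : 0 < u := lt_trans hx1 hu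
      rw [(hw u hu').deriv]
      exact mul_pos (exp_pos _) (hgX u hu' (lt_of_le_of_lt hXx1 hu))
  have hfpos : 0 < f (x1 + 1) := by
    have h1 := smono (self_mem_Ici) (show x1 + 1 ∈ Ici x1 by simp) (by linarith)
    have h2 : 0 ≤ exp (-A x1) * f x1 := mul_nonneg (exp_pos _).le (nonneg _ hxx1)
    exact pos_of_mul_pos_right (lt_of_le_of_lt h2 h1) (exp_pos _).le
  have hv : ∀ u, 0 < u → HasDerivAt (fun u => exp (-u) * f u)
      (exp (-u) * ((P u - 1) * f u + g u)) u := by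
    intro u hu
    refine HasDerivAt.congr_deriv (((hasDerivAt_id u).neg.exp).mul (hf u hu)) ?_
    symm
    simp only [Pi.neg_apply, id]
    ring
  have mono2 : MonotoneOn (fun u => exp (-u) * f u) (Ici x) := by
    refine monotoneOn_of_deriv_nonneg (convex_Ici x) ?_ ?_ ?_
    · intro u hu
      exact (hv u (lt_of_lt_of_le hx hu)).continuousAt.continuousWithinAt
    · intro u hu
      rw [interior_Ici] at hu
      exact (hv u (lt_trans hx hu)).differentiableAt.differentiableWithinAt
    · intro u hu
      rw [interior_Ici] at hu
      have hu' : 0 < u := lt_trans hx hu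
      rw [(hv u hu').deriv]
      exact mul_nonneg (exp_pos _).le (add_nonneg
        (mul_nonneg (by linarith [hP u hu']) (nonneg u (le_of_lt hu))) (hg u hu'))
  have hM0 : 0 < M := lt_of_lt_of_le hfpos (hM _ (by linarith))
  obtain ⟨z, hz⟩ : ∃ z, z = x1 + 1 := ⟨_, rfl⟩
  rw [← hz] at hfpos
  obtain ⟨L, hL⟩ : ∃ L, L = M / f z := ⟨_, rfl⟩
  have hLpos : 0 < L := hL ▸ div_pos hM0 hfpos
  have h1 : exp (-z) * f z ≤ exp (-(z + L)) * f (z + L) :=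
    mono2 (show x ≤ z by linarith) (show x ≤ z + L by linarith) (by linarith)
  have h2 := hM (z + L) (by linarith)
  have h3 : f z * exp L ≤ f (z + L) := by
    rw [neg_add z L, exp_add, mul_assoc] at h1
    have h4 := le_of_mul_le_mul_left h1 (exp_pos _)
    calc f z * exp L ≤ (exp (-L) * f (z + L)) * exp L := by gcongr
      _ = f (z + L) * (exp (-L) * exp L) := by ring
      _ = f (z + L) := by rw [← exp_add]; simp
  have h5 : f z * (L + 1) ≤ f z * exp L := by gcongr; exact add_one_le_exp L
  have h6 : f z * L = M := by rw [hL]; field_simp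
  linarith

theorem besselK_ratio_close_to_best_lower (lam ν x : ℝ)
    (hlam : lam ∈ Set.Icc (1 / 2 : ℝ) 2) (hν : lam ≤ ν)
    (hpos : 0 < ν + lam + 1 - 2 * Real.sqrt (2 * lam)) (hx : 0 < x) :
    besselK (ν + 1) x / besselK ν x >
      (ν + lam +
          Real.sqrt ((ν - lam) ^ 2 +
            ((ν - lam) / (ν + lam - 2 * Real.sqrt (2 * lam) + 1)) * x ^ 2)) / x := by
  obtain ⟨hl, -⟩ := hlam
  have hν0 : 0 < ν := by linarith
  rcases hν.eq_or_lt with heq | hlt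
  · subst heq
    have r := bk_rec lam x hx
    have hK := bk_pos lam x hx
    have hK' := bk_pos (lam - 1) x hx
    simp only [sub_self, zero_div, zero_mul, ne_eq, OfNat.ofNat_ne_zero, not_false_eq_true,
      zero_pow, add_zero, sqrt_zero]
    rw [gt_iff_lt, div_lt_div_iff₀ hx hK]
    nlinarith
  obtain ⟨k, hk⟩ : ∃ k, k = Real.sqrt (2 * lam) - 1 := ⟨_, rfl⟩
  have hsq : Real.sqrt (2 * lam) ^ 2 = 2 * lam := Real.sq_sqrt (by linarith)
  have hk0 : 0 ≤ k := by
    have : 1 ≤ Real.sqrt (2 * lam) := Real.one_le_sqrt.2 (by linarith)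
    linarith
  have hlk : lam = (1 + k) ^ 2 / 2 := by rw [hk]; linarith [hsq, show
    (1 + (Real.sqrt (2 * lam) - 1)) ^ 2 = Real.sqrt (2 * lam) ^ 2 by ring]
  obtain ⟨μ, hμ⟩ : ∃ μ, μ = ν - lam := ⟨_, rfl⟩
  have hμ0 : 0 < μ := by linarith
  have hD : ν + lam - 2 * Real.sqrt (2 * lam) + 1 = μ + k ^ 2 := by
    rw [hμ, hk]; linear_combination -hsq
  have hDpos : 0 < μ + k ^ 2 := by positivity
  rw [hD, ← hμ]
  obtain ⟨c, hc⟩ : ∃ c, c = μ / (μ + k ^ 2) := ⟨_, rfl⟩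
  have hc0 : 0 < c := by rw [hc]; positivity
  have hc1 : c ≤ 1 := by rw [hc, div_le_one hDpos]; nlinarith
  rw [← hc]
  obtain ⟨s, hs⟩ : ∃ s : ℝ → ℝ, s = fun z => Real.sqrt (μ ^ 2 + c * z ^ 2) := ⟨_, rfl⟩
  obtain ⟨y, hy⟩ : ∃ y : ℝ → ℝ, y = fun z => z * besselK (ν + 1) z / besselK ν z := ⟨_, rfl⟩
  have hss : ∀ z, s z ^ 2 = μ ^ 2 + c * z ^ 2 := fun z => by
    rw [hs]; exact Real.sq_sqrt (by positivity)
  have hspos : ∀ z, 0 < s z := fun z => by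
    rw [hs]; exact Real.sqrt_pos.2 (by positivity)
  have hsμ : ∀ z, 0 < z → μ < s z := fun z hz => by
    have h1 := hss z
    have h2 := hspos z
    have h3 : 0 < c * z ^ 2 := by positivity
    nlinarith
  have hsub : ∀ z, 0 < z → s z ≤ μ + z := fun z hz => by
    have h1 := hss z
    have h2 := hspos z
    have h3 : c * z ^ 2 ≤ z ^ 2 := by nlinarith [sq_nonneg z]
    nlinarith [mul_pos hμ0 hz]
  have hyz : ∀ z, 0 < z → z ≤ y z := fun z hz => by
    have hK := bk_pos ν z hz
    rw [hy]
    show z ≤ z * besselK (ν + 1) z / besselK ν z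
    rw [le_div_iff₀ hK]
    have := bk_mono ν z hν0.le hz
    gcongr
  have hyd : ∀ z, 0 < z → HasDerivAt y ((y z ^ 2 - 2 * ν * y z - z ^ 2) / z) z := fun z hz => by
    rw [hy]; exact bk_riccati ν z hz
  have hsd : ∀ z, HasDerivAt s (c * z / s z) z := fun z => by
    have h1 : HasDerivAt (fun z : ℝ => μ ^ 2 + c * z ^ 2) (c * (2 * z)) z := by
      simpa using ((hasDerivAt_pow 2 z).const_mul c).const_add (μ ^ 2)
    have h2 := h1.sqrt (by positivity)
    have h3 : s z = Real.sqrt (μ ^ 2 + c * z ^ 2) := by rw [hs]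
    rw [← h3] at h2
    have h4 := hspos z
    rw [hs] at h4 ⊢
    rw [hs] at h2
    refine HasDerivAt.congr_deriv (h2) ?_
    symm
    field_simp
  have hneg := bk_compare (fun z => ν + lam + s z - y z)
    (fun z => (y z + (ν + lam + s z) - 2 * ν) / z)
    (fun z => (s z - μ) * (k * s z - μ) ^ 2 / (μ * s z) / z) (2 * ν) (μ ^ 2 / (c * k ^ 2) + 1)
    ?_ ?_ ?_ ?_ ?_ ?_ x hx
  · have hK := bk_pos ν x hx
    have h1 : ν + lam + s x < y x := by linarith
    rw [hs, hy] at h1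
    rw [gt_iff_lt, div_lt_iff₀ hx]
    calc _ < _ := h1
      _ = _ := by ring
  · intro z hz
    have h := ((hsd z).const_add (ν + lam)).sub (hyd z hz)
    refine HasDerivAt.congr_deriv (h) ?_
    symm
    have h1 := hss z
    have h2 := hspos z
    have hcx : μ * z ^ 2 = (μ + k ^ 2) * (s z ^ 2 - μ ^ 2) := by
      rw [h1, hc]; field_simp; ring
    have hz2 : z ^ 2 = (μ + k ^ 2) * (s z ^ 2 - μ ^ 2) / μ := by
      field_simp; linarith
    have hν' : ν = μ + lam := by linarith
    have hcs : c * z / s z = (s z ^ 2 - μ ^ 2) / (s z * z) := by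
      rw [h1]; field_simp; ring
    rw [hcs, hz2, hν', hlk]
    field_simp
    ring
  · have hyc : ContinuousOn y (Ioi 0) := fun z hz =>
      (hyd z hz).continuousAt.continuousWithinAt
    have hsc : ContinuousOn s (Ioi 0) := fun z hz => (hsd z).continuousAt.continuousWithinAt
    refine ContinuousOn.div ?_ continuousOn_id (fun z hz => (ne_of_gt hz))
    exact (hyc.add (continuousOn_const.add hsc)).sub continuousOn_const
  · intro z hz
    rw [le_div_iff₀ hz]
    linarith [hyz z hz, hsμ z hz]
  · intro z hz
    have h1 := hsμ z hz
    have h2 := hspos z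
    have h3 : 0 ≤ s z - μ := by linarith
    positivity
  · intro z hz hX
    have h1 := hsμ z hz
    have h2 := hspos z
    have h3 : 0 < s z - μ := by linarith
    have h4 : k * s z - μ ≠ 0 := by
      intro h
      rcases hk0.eq_or_lt with h0 | h0
      · rw [← h0] at h; linarith
      · have e : k ^ 2 * s z ^ 2 = μ ^ 2 := by
          have : k * s z = μ := by linarith
          rw [← mul_pow, this]
        have hck : 0 < c * k ^ 2 := by positivity
        have hY : 0 < μ ^ 2 / (c * k ^ 2) := by positivity
        have h5 : μ ^ 2 / (c * k ^ 2) < z ^ 2 := by nlinarith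
        rw [div_lt_iff₀ hck] at h5
        rw [hss z] at e
        nlinarith [mul_pos (pow_pos h0 2) (pow_pos hμ0 2)]
    have h5 : 0 < (k * s z - μ) ^ 2 := by positivity
    positivity
  · intro z hz
    linarith [hyz z hz, hsub z hz]
end
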